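/- For colors a_1,…,a_k ∈ A, the colored immaculate function indexed by the sentence of single-letter words (a_1,…,a_k) satisfies 𝔖_{(a_1,…,a_k)} = R_{(a_1,…,a_k)} = Σ_{(a_1,…,a_k) ⪯ J} (−1)^{k−ℓ(J)} H_J, the sum running over all coarsenings J of (a_1,…,a_k). -/

import Mathlib

open scoped BigOperators

namespace ColoredImm

variable {A : Type*}

/-- A *weak sentence* over the alphabet `A`: a finite list of words (words may be empty). -/
abbrev Sentence (A : Type*) := List (List A)

/-- A genuine *sentence*: all of its words are nonempty. -/
def IsSentence (I : Sentence A) : Prop := ∀ w ∈ I, w ≠ []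

/-- The size `|I|` of a sentence: its total number of letters. -/
def size (I : Sentence A) : ℕ := (I.map List.length).sum

/-- The word lengths `wℓ(I)` of a sentence. -/
def wl (I : Sentence A) : List ℕ := I.map List.length

/-- The flattening of a weak sentence: delete all empty words. -/
def flattenWS (I : Sentence A) : Sentence A := I.filter (fun w => !w.isEmpty)

/-- `Refines J I` means `J ⪯ I`: the sentence `I` can be obtained by concatenating
some adjacent words of `J` (so `J` is a refinement of `I`, and `I` a coarsening of `J`). -/
def Refines (J I : Sentence A) : Prop :=
  ∃ P : List (Sentence A), (∀ p ∈ P, p ≠ []) ∧ P.flatten = J ∧ P.map List.flatten = I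

/-! ### Fillings and colored immaculate tableaux -/

/-- An integer filling of a diagram, recorded row by row. -/
abbrev Filling := List (List ℕ)

/-- The entry of a filling at box `b = (row, column)` (0-indexed), with default `0`. -/
def entryAt (f : Filling) (b : ℕ × ℕ) : ℕ := (f.getD b.1 []).getD b.2 0

/-- `IsCIT I f`: `f` is a colored immaculate tableau of shape `I`; that is, `f` has the
same shape as the colored composition diagram of `I`, its entries are positive integers
weakly increasing left to right along each row, and the entries in the first column are
strictly increasing from top to bottom. -/
def IsCIT (I : Sentence A) (f : Filling) : Prop :=
  f.map List.length = I.map List.length ∧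
  (∀ row ∈ f, row.Chain' (· ≤ ·)) ∧
  (f.filterMap List.head?).Chain' (· < ·) ∧
  (∀ x ∈ f.flatten, 1 ≤ x)

/-- The colors (letters of `w`) of the boxes of one row whose entry (in `row`) is `v`,
read from left to right. -/
def rowWith (w : List A) (row : List ℕ) (v : ℕ) : List A :=
  ((w.zip row).filter (fun p => p.2 == v)).map Prod.fst

/-- The word of the type of a tableau at value `v`: the colors of all boxes with entry `v`,
read left to right, from the bottom row up to the top row. -/
def typeWord (I : Sentence A) (f : Filling) (v : ℕ) : List A :=
  (((I.zip f).reverse).map (fun p => rowWith p.1 p.2 v)).flatten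

/-- `HasType I f B` : the tableau `f` (of shape `I`) has type the weak sentence `B`,
i.e. for every positive integer `v`, the colors of the boxes of `f` containing `v`
(read left to right, bottom to top) form the `v`-th word of `B`. -/
def HasType (I : Sentence A) (f : Filling) (B : Sentence A) : Prop :=
  ∀ v, 1 ≤ v → typeWord I f v = B.getD (v - 1) []

/-- `K_{J,B}`: the number of colored immaculate tableaux of shape `J` and type `B`. -/
noncomputable def KJB (J B : Sentence A) : ℕ :=
  Set.ncard {f : Filling | IsCIT J f ∧ HasType J f B}

/-! ### Standardization -/

/-- The list of boxes of a filling. -/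
def boxes (f : Filling) : List (ℕ × ℕ) :=
  ((List.range f.length).map
    (fun r => (List.range (f.getD r []).length).map (fun j => (r, j)))).flatten

/-- `beforeB f b b'`: box `b` comes strictly before box `b'` in the type-reading order of `f`
(smaller entries first; among equal entries, lower rows first, and within a row left to right). -/
def beforeB (f : Filling) (b b' : ℕ × ℕ) : Bool :=
  entryAt f b < entryAt f b' ||
    (entryAt f b == entryAt f b' && (b'.1 < b.1 || (b.1 == b'.1 && b.2 < b'.2)))

/-- The standardization of a filling: each box is renumbered (starting from `1`)
according to its position in the type-reading order. -/
def stdFill (f : Filling) : Filling :=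
  (List.range f.length).map (fun r =>
    (List.range (f.getD r []).length).map (fun j =>
      1 + ((boxes f).filter (fun b' => beforeB f b' (r, j))).length))

/-- The number of boxes of a filling. -/
def nBoxes (f : Filling) : ℕ := f.flatten.length

/-- A filling of `n` boxes is standard when its entries are exactly `1, …, n`,
each appearing once. -/
def IsStandardF (f : Filling) : Prop := f.flatten.Perm (List.range' 1 (nBoxes f))

/-! ### Descents and the colored descent composition -/

/-- The (0-indexed) row containing the value `v` in a standard filling. -/
def rowOf (f : Filling) (v : ℕ) : ℕ := f.findIdx (fun row => row.contains v)

/-- The sorted list of descents of a standard filling: those `i` with `1 ≤ i ≤ n-1`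
such that `i+1` lies in a strictly lower row than `i`. -/
def descList (f : Filling) : List ℕ :=
  (List.range' 1 (nBoxes f - 1)).filter (fun i => decide (rowOf f i < rowOf f (i + 1)))

/-- The composition of `n` associated to a set of split positions `d_1 < … < d_k`:
`(d_1, d_2 - d_1, …, n - d_k)`. -/
def compOf (ds : List ℕ) (n : ℕ) : List ℕ :=
  List.zipWith (fun a b => b - a) (0 :: ds) (ds ++ [n])

/-- Split a word into a sentence according to a composition. -/
def splitByComp : List A → List ℕ → List (List A)
  | _, [] => []
  | w, a :: rest => w.take a :: splitByComp (w.drop a) rest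

/-- The color of the box containing the value `v` in a standard filling of shape `I`. -/
def colorOf [Inhabited A] (I : Sentence A) (f : Filling) (v : ℕ) : A :=
  (I.getD (rowOf f v) []).getD ((f.getD (rowOf f v) []).findIdx (fun x => x == v)) default

/-- The maximal word of the colored descent composition of a standard filling of shape `I`:
the colors of its boxes read in the order of their integer entries. -/
def readWord [Inhabited A] (I : Sentence A) (f : Filling) : List A :=
  (List.range (nBoxes f)).map (fun i => colorOf I f (i + 1))

/-- The colored descent composition `co_A(U)` of a standard colored immaculate tableau:
read the colors of the boxes in the order of their entries, starting a new word
immediately after each descent. -/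
def coA [Inhabited A] (I : Sentence A) (f : Filling) : Sentence A :=
  if nBoxes f = 0 then [] else splitByComp (readWord I f) (compOf (descList f) (nBoxes f))

/-- `L_{J,C}`: the number of standard colored immaculate tableaux of shape `J`
with colored descent composition `C`. -/
noncomputable def LJC [Inhabited A] (J C : Sentence A) : ℕ :=
  Set.ncard {f : Filling | IsCIT J f ∧ IsStandardF f ∧ coA J f = C}

/-! ### The colored quasisymmetric functions `QSym_A` -/

/-- A (normal form of a) monomial in the partially commutative variables `x_{a,i}`:
a pair consisting of the list of words `(w_1, …, w_m)` and the list of (strictly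
increasing, positive) second indices `(j_1 < … < j_m)`, representing
`x_{w_1,j_1} ⋯ x_{w_m,j_m}`. -/
abbrev Mono (A : Type*) := List (List A) × List ℕ

/-- A colored quasisymmetric "series": a formal linear combination of monomials,
recorded by its coefficient function.  `QSym_A` itself is the span of the colored
monomial functions `MQ I` inside this space. -/
abbrev QSymA (A : Type*) := Mono A → ℚ

/-- Validity of a monomial normal form: words and indices match up, the indices are
strictly increasing positive integers, and all words are nonempty. -/
def ValidMono (m : Mono A) : Prop :=
  m.1.length = m.2.length ∧ m.2.Chain' (· < ·) ∧ (∀ j ∈ m.2, 1 ≤ j) ∧ ∀ w ∈ m.1, w ≠ []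

open Classical in
/-- The colored monomial quasisymmetric function `M_I`: the sum of all monomials
`x_{w_1,j_1} ⋯ x_{w_m,j_m}` with `j_1 < … < j_m`, where `I = (w_1, …, w_m)`. -/
noncomputable def MQ (I : Sentence A) : QSymA A := fun m =>
  if m.1 = I ∧ ValidMono m then 1 else 0

/-- The largest entry of a filling. -/
def maxEntry (f : Filling) : ℕ := f.flatten.foldr max 0

/-- The monomial `x_T` of a colored immaculate tableau `T = f` of shape `I`:
for `T` of type `B = (u_1, …, u_j)` it is `x_{u_1,1} x_{u_2,2} ⋯ x_{u_j,j}`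
(empty words are skipped). -/
def monoOf (I : Sentence A) (f : Filling) : Mono A :=
  let vs := ((List.range (maxEntry f)).map (· + 1)).filter (fun v => !(typeWord I f v).isEmpty)
  (vs.map (typeWord I f), vs)

/-- The colored dual immaculate function `𝔖*_J = Σ_T x_T`, the sum of the monomials of all
colored immaculate tableaux `T` of shape `J` (its coefficient at a monomial `m` is the
number of such tableaux with `x_T = m`). -/
noncomputable def dualImm (J : Sentence A) : QSymA A := fun m =>
  (Set.ncard {f : Filling | IsCIT J f ∧ monoOf J f = m} : ℚ)

/-- The colored fundamental quasisymmetric function `F_I = Σ_{J ⪯ I} M_J`. -/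
noncomputable def FQ (I : Sentence A) : QSymA A :=
  ∑ᶠ J ∈ {J : Sentence A | Refines J I}, MQ J

/-! ### The colored immaculate descent graph -/

/-- Edges of the colored immaculate descent graph: a directed edge from `I` to `J` (`J ≠ I`)
whenever some standard colored immaculate tableau of shape `I` has colored descent
composition `J`. -/
def IsEdge [Inhabited A] (I J : Sentence A) : Prop := J ≠ I ∧ LJC I J ≠ 0

/-- Directed paths from `I` to `K` in the colored immaculate descent graph, recorded by
their (nonempty) lists of successive vertices; the path `[I]` is the empty path at `I`. -/
def PathsFromTo [Inhabited A] (I K : Sentence A) : Set (List (Sentence A)) :=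
  {p | p.head? = some I ∧ p.getLast? = some K ∧ p.Chain' IsEdge}

/-- The signed weight `(-1)^{ℓ(𝒫)} prod(𝒫)` of a directed path `𝒫`:
`ℓ(𝒫)` is its number of edges and `prod(𝒫)` the product of its edge weights `L_{I,J}`. -/
noncomputable def pathWeight [Inhabited A] (p : List (Sentence A)) : ℚ :=
  ((-1 : ℚ)) ^ (p.length - 1) * ((p.zip p.tail).map (fun e => (LJC e.1 e.2 : ℚ))).prod

/-- `L⁻¹_{I,K} = Σ_𝒫 (-1)^{ℓ(𝒫)} prod(𝒫)`, summed over all directed paths `𝒫`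
from `I` to `K` in the colored immaculate descent graph. -/
noncomputable def Linv [Inhabited A] (I K : Sentence A) : ℚ :=
  ∑ᶠ p ∈ PathsFromTo I K, pathWeight p

/-! ### The colored noncommutative symmetric functions `NSym_A` -/

/-- A formal series over the complete homogeneous basis `{H_I}` of `NSym_A`, recorded by its
coefficient function on (weak) sentences.  `NSym_A` itself consists of the finitely
supported elements supported on genuine sentences; see `InNSym`. -/
abbrev NSymA (A : Type*) := Sentence A → ℚ

/-- Membership in `NSym_A` proper: finitely supported, and supported on genuine sentences. -/
def InNSym (f : NSymA A) : Prop :=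
  (Function.support f).Finite ∧ ∀ I, f I ≠ 0 → IsSentence I

open Classical in
/-- The colored complete homogeneous noncommutative symmetric function
`H_I = H_{w_1} ⋯ H_{w_k}`. -/
noncomputable def Hd (I : Sentence A) : NSymA A := fun J => if J = I then 1 else 0

/-- `H_w` for a single word `w`, with `H_∅ = 1`. -/
noncomputable def Hw (w : List A) : NSymA A := if w.isEmpty then Hd [] else Hd [w]

/-- Multiplication in `NSym_A` (the concatenation product, extended to series):
`H_I · H_J = H_{I ⬝ J}`. -/
def mulN (f g : NSymA A) : NSymA A := fun I =>
  ∑ j ∈ Finset.range (I.length + 1), f (I.take j) * g (I.drop j)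

/-- The duality pairing `⟨·,·⟩ : NSym_A × QSym_A → ℚ`, determined by
`⟨H_I, M_J⟩ = δ_{I,J}`: the `M_I`-coefficient of a quasisymmetric function is its
coefficient on the monomial `x_{w_1,1} x_{w_2,2} ⋯ x_{w_k,k}`. -/
noncomputable def pairNQ (G : NSymA A) (F : QSymA A) : ℚ :=
  ∑ᶠ I ∈ {I : Sentence A | IsSentence I}, G I * F (I, List.range' 1 I.length)

/-- All ways of splitting each word of a list of words into a prefix and a suffix. -/
def splitsOf : List (List A) → List (List (List A) × List (List A))
  | [] => [([], [])]
  | w :: ws =>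
      (((splitsOf ws).map (fun p =>
        (List.range (w.length + 1)).map (fun t => (w.take t :: p.1, w.drop t :: p.2))))).flatten

/-- Restriction of a candidate monomial: keep only the nonempty words together with
their indices. -/
def restrictMono (ws : List (List A)) (js : List ℕ) : Mono A :=
  let ps := (ws.zip js).filter (fun p => !p.1.isEmpty)
  (ps.map Prod.fst, ps.map Prod.snd)

/-- The product of colored quasisymmetric series: the coefficient of a monomial in `F·G`
is the sum, over all ways of writing each of its words as a concatenation of a word of a
monomial of `F` (on the left) and a word of a monomial of `G` (on the right), of the
products of the corresponding coefficients. -/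
def mulQ (F G : QSymA A) : QSymA A := fun m =>
  ((splitsOf m.1).map (fun p => F (restrictMono p.1 m.2) * G (restrictMono p.2 m.2))).sum

/-- The right perp operator `M^⊸` of `M ∈ QSym_A`, the linear operator on `NSym_A`
determined by `⟨M^⊸(H), G⟩ = ⟨H, G·M⟩`; explicitly, for the dual bases `{M_I}` and `{H_I}`,
`M^⊸(H) = Σ_I ⟨H, M_I · M⟩ H_I`. -/
noncomputable def rperp (M : QSymA A) (H : NSymA A) : NSymA A :=
  ∑ᶠ I ∈ {I : Sentence A | IsSentence I}, pairNQ H (mulQ (MQ I) M) • Hd I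

/-- The colored noncommutative Bernstein operator
`𝔹_v = Σ_u Σ_{Q : w(Q^r) = u} (-1)^{ℓ(Q)} H_{v·u} · (Σ_{S ⪰ Q} M_S^⊸)`,
where `Q` runs over all sentences, `u = w(Q^r)` is the concatenation of the words of `Q`
in reverse order, and `S` runs over all coarsenings of `Q`. -/
noncomputable def Bern (v : List A) (f : NSymA A) : NSymA A :=
  ∑ᶠ Q ∈ {Q : Sentence A | IsSentence Q},
    ((-1 : ℚ)) ^ Q.length •
      mulN (Hw (v ++ Q.reverse.flatten))
        (∑ᶠ S ∈ {S : Sentence A | Refines Q S}, rperp (MQ S) f)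

/-- The colored immaculate function `𝔖_J = 𝔹_{v_1} 𝔹_{v_2} ⋯ 𝔹_{v_h}(1)`. -/
noncomputable def ImmS (J : Sentence A) : NSymA A := J.foldr Bern (Hd [])

/-- The colored ribbon function `R_I = Σ_{J ⪰ I} (-1)^{ℓ(J) - ℓ(I)} H_J`. -/
noncomputable def Rib (I : Sentence A) : NSymA A :=
  ∑ᶠ J ∈ {J : Sentence A | Refines I J}, ((-1 : ℚ)) ^ (I.length - J.length) • Hd J

/-- The Pieri relation `J ⊂_w K` for a sentence `J = (v_1, …, v_h)` and a word `w`: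
`K = (u_1, …, u_g)` with `h ≤ g ≤ h+1` (setting `v_{h+1} = ∅`) and `u_j = v_j · q_j`
for words `q_j` (possibly empty) whose reversed concatenation `q_g ⋯ q_1` equals `w`. -/
def PieriRel (J : Sentence A) (w : List A) (K : Sentence A) : Prop :=
  J.length ≤ K.length ∧ K.length ≤ J.length + 1 ∧
  ∃ q : List (List A), q.length = K.length ∧ q.reverse.flatten = w ∧
    ∀ j < K.length, K.getD j [] = J.getD j [] ++ q.getD j []

/-- Right containment of a weak sentence `K` in `J`: same length, and each word of `K` is a
suffix of the corresponding word of `J`. -/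
def RightContained (K J : Sentence A) : Prop :=
  K.length = J.length ∧ ∀ i < J.length, (K.getD i []).IsSuffix (J.getD i [])

/-- The weak sentence `J/_R K`: remove each word of `K` from the right end of the
corresponding word of `J`. -/
def rightQuot (J K : Sentence A) : Sentence A :=
  List.zipWith (fun v u => v.take (v.length - u.length)) J K

/-- Left containment `J ⊆_L I`: `ℓ(J) ≤ ℓ(I)` and each word of `J` is a prefix of the
corresponding word of `I`. -/
def LeftContained (J I : Sentence A) : Prop :=
  J.length ≤ I.length ∧ ∀ i < J.length, (J.getD i []).IsPrefix (I.getD i [])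

/-- A skew colored immaculate tableau of shape `I/J`: a filling of the active boxes
(the `i`-th row keeps the last `|w_i| - |v_i|` boxes) with positive integers, rows weakly
increasing left to right, and the entries in the (active part of the) first column of `I`
strictly increasing top to bottom. -/
def IsSkewCIT (I J : Sentence A) (f : Filling) : Prop :=
  f.map List.length =
    (List.range I.length).map (fun i => (I.getD i []).length - (J.getD i []).length) ∧
  (∀ row ∈ f, row.Chain' (· ≤ ·)) ∧
  ((List.range I.length).filterMap
    (fun i => if (J.getD i []).length = 0 then (f.getD i []).head? else none)).Chain' (· < ·) ∧
  (∀ x ∈ f.flatten, 1 ≤ x)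

/-- The word of the type of a skew tableau at value `v`: the colors of the active boxes with
entry `v`, read left to right, bottom to top. -/
def skewTypeWord (I J : Sentence A) (f : Filling) (v : ℕ) : List A :=
  (((List.range I.length).reverse).map (fun i =>
    rowWith ((I.getD i []).drop (J.getD i []).length) (f.getD i []) v)).flatten

/-- `SkewHasType I J f K` : the skew tableau `f` of shape `I/J` has type `K`. -/
def SkewHasType (I J : Sentence A) (f : Filling) (K : Sentence A) : Prop :=
  ∀ v, 1 ≤ v → skewTypeWord I J f v = K.getD (v - 1) []

/-! ### The complement involution `ψ` and the row-strict functions -/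

/-- The complement `I^c` of a sentence: the unique sentence with the same maximal word
that splits exactly where `I` does not. -/
def complSent (I : Sentence A) : Sentence A :=
  let w := I.flatten
  let n := w.length
  if n = 0 then []
  else
    let splits := (((wl I).scanl (· + ·) 0).drop 1).dropLast
    let csplits := (List.range' 1 (n - 1)).filter (fun i => !(splits.contains i))
    splitByComp w (compOf csplits n)

/-- The `M_I`-coefficient of a colored quasisymmetric function. -/
noncomputable def coeffM (G : QSymA A) (I : Sentence A) : ℚ := G (I, List.range' 1 I.length)

/-- The image of `M_I` under `ψ`, via `M_I = Σ_{J ⪯ I} (-1)^{ℓ(J)-ℓ(I)} F_J` and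
`ψ(F_J) = F_{J^c}`. -/
noncomputable def psiM (I : Sentence A) : QSymA A :=
  ∑ᶠ J ∈ {J : Sentence A | Refines J I}, ((-1 : ℚ)) ^ (J.length - I.length) • FQ (complSent J)

/-- The linear involution `ψ` of `QSym_A`, determined by `ψ(F_I) = F_{I^c}`. -/
noncomputable def psiQ (G : QSymA A) : QSymA A :=
  ∑ᶠ I ∈ {I : Sentence A | IsSentence I}, coeffM G I • psiM I

/-- A colored row-strict immaculate tableau of shape `I`: entries strictly increase left to
right along each row and weakly increase top to bottom down the first column. -/
def IsCRSIT (I : Sentence A) (f : Filling) : Prop :=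
  f.map List.length = I.map List.length ∧
  (∀ row ∈ f, row.Chain' (· < ·)) ∧
  (f.filterMap List.head?).Chain' (· ≤ ·) ∧
  (∀ x ∈ f.flatten, 1 ≤ x)

/-- The word of the type of a row-strict tableau at value `v`: the colors of the boxes with
entry `v`, read left to right, top to bottom. -/
def rsTypeWord (I : Sentence A) (f : Filling) (v : ℕ) : List A :=
  ((I.zip f).map (fun p => rowWith p.1 p.2 v)).flatten

/-- The monomial `x_T` of a colored row-strict immaculate tableau. -/
def rsMonoOf (I : Sentence A) (f : Filling) : Mono A :=
  let vs := ((List.range (maxEntry f)).map (· + 1)).filter (fun v => !(rsTypeWord I f v).isEmpty)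
  (vs.map (rsTypeWord I f), vs)

/-- The colored row-strict dual immaculate function `ℛ𝔖*_J = Σ_T x_T`, summed over all
colored row-strict immaculate tableaux `T` of shape `J`. -/
noncomputable def rsDualImm (J : Sentence A) : QSymA A := fun m =>
  (Set.ncard {f : Filling | IsCRSIT J f ∧ rsMonoOf J f = m} : ℚ)

/-- `α ⪰ β` in the reverse lexicographic order on compositions: at the first index where
they differ, `α` has the *smaller* entry (padding with zeros). -/
def RevLexGE (α β : List ℕ) : Prop :=
  α = β ∨ ∃ i, (∀ j < i, α.getD j 0 = β.getD j 0) ∧ α.getD i 0 < β.getD i 0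

/-! ### Uncolored (ordinary) versions, for `QSym` -/

namespace Uncolored

/-- A composition: a list of positive integers. -/
def IsComposition (α : List ℕ) : Prop := ∀ a ∈ α, 1 ≤ a

/-- `β ⪯ α`: the composition `α` is obtained by summing adjacent parts of `β`. -/
def RefinesC (β α : List ℕ) : Prop :=
  ∃ P : List (List ℕ), (∀ p ∈ P, p ≠ []) ∧ P.flatten = β ∧ P.map List.sum = α

/-- A monomial `x_{i_1}^{a_1} ⋯ x_{i_m}^{a_m}` recorded by its exponents and its
strictly increasing positive indices. -/
abbrev MonoU := List ℕ × List ℕ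

/-- A quasisymmetric "series", recorded by its coefficient function on monomials.
`QSym` is the span of the monomial functions `MU α` inside this space. -/
abbrev QSymU := MonoU → ℚ

/-- Validity of a monomial: matching lengths, strictly increasing positive indices,
positive exponents. -/
def ValidMonoU (m : MonoU) : Prop :=
  m.1.length = m.2.length ∧ m.2.Chain' (· < ·) ∧ (∀ j ∈ m.2, 1 ≤ j) ∧ ∀ a ∈ m.1, 1 ≤ a

open Classical in
/-- The monomial quasisymmetric function `M_α`. -/
noncomputable def MU (α : List ℕ) : QSymU := fun m =>
  if m.1 = α ∧ ValidMonoU m then 1 else 0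

/-- The fundamental quasisymmetric function `F_α = Σ_{β ⪯ α} M_β`. -/
noncomputable def FU (α : List ℕ) : QSymU :=
  ∑ᶠ β ∈ {β : List ℕ | RefinesC β α}, MU β

/-- An immaculate tableau of shape `α`: positive integer entries, rows weakly increasing
left to right, first column strictly increasing top to bottom. -/
def IsIT (α : List ℕ) (f : Filling) : Prop :=
  f.map List.length = α ∧
  (∀ row ∈ f, row.Chain' (· ≤ ·)) ∧
  (f.filterMap List.head?).Chain' (· < ·) ∧
  (∀ x ∈ f.flatten, 1 ≤ x)

/-- The number of boxes of `f` with entry `v`. -/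
def countOf (f : Filling) (v : ℕ) : ℕ := (f.flatten.filter (fun x => x == v)).length

/-- The monomial `x^T` of an immaculate tableau `T` of type `β`:
`x_1^{β_1} ⋯ x_h^{β_h}` (zero exponents skipped). -/
def monoOfU (f : Filling) : MonoU :=
  let vs := ((List.range (maxEntry f)).map (· + 1)).filter (fun v => decide (countOf f v ≠ 0))
  (vs.map (countOf f), vs)

/-- The dual immaculate function `𝔖*_α = Σ_T x^T`, summed over all immaculate tableaux
of shape `α`. -/
noncomputable def dualImmU (α : List ℕ) : QSymU := fun m =>
  (Set.ncard {f : Filling | IsIT α f ∧ monoOfU f = m} : ℚ)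

/-- The descent composition `co(U)` of a standard immaculate tableau. -/
def descComp (f : Filling) : List ℕ :=
  if nBoxes f = 0 then [] else compOf (descList f) (nBoxes f)

/-- `L_{α,β}`: the number of standard immaculate tableaux of shape `α` with descent
composition `β`. -/
noncomputable def LU (α β : List ℕ) : ℕ :=
  Set.ncard {f : Filling | IsIT α f ∧ IsStandardF f ∧ descComp f = β}

/-- Edges of the immaculate descent graph `𝔇^n`. -/
def IsEdgeU (α β : List ℕ) : Prop := β ≠ α ∧ LU α β ≠ 0

/-- Directed paths from `α` to `β` in the immaculate descent graph, recorded by their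
lists of successive vertices; `[α]` is the empty path at `α`. -/
def PathsU (α β : List ℕ) : Set (List (List ℕ)) :=
  {p | p.head? = some α ∧ p.getLast? = some β ∧ p.Chain' IsEdgeU}

/-- The signed weight `(-1)^{ℓ(𝒫)} prod(𝒫)` of a path. -/
noncomputable def pathWeightU (p : List (List ℕ)) : ℚ :=
  ((-1 : ℚ)) ^ (p.length - 1) * ((p.zip p.tail).map (fun e => (LU e.1 e.2 : ℚ))).prod

/-- `L⁻¹_{α,β} = Σ_𝒫 (-1)^{ℓ(𝒫)} prod(𝒫)`, over directed paths from `α` to `β` in `𝔇^n`. -/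
noncomputable def LinvU (α β : List ℕ) : ℚ :=
  ∑ᶠ p ∈ PathsU α β, pathWeightU p

end Uncolored

end ColoredImm

namespace ColoredImm

/-- Sentences with a given underlying word. -/
def XS {A : Type*} (u : List A) : Set (Sentence A) := {K | IsSentence K ∧ K.flatten = u}

def glueL {A : Type*} (q : List A) : Sentence A → Sentence A
  | [] => []
  | w :: J => (q ++ w) :: J

def sgn {A : Type*} (K : Sentence A) : ℚ := (-1) ^ (K.flatten.length + K.length)

theorem isSentence_cons {A : Type*} {w : List A} {K : Sentence A} :
    IsSentence (w :: K) ↔ w ≠ [] ∧ IsSentence K := by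
  simp [IsSentence]

theorem isSentence_nil {A : Type*} : IsSentence ([] : Sentence A) := by
  simp [IsSentence]

theorem sgn_nil {A : Type*} : sgn ([] : Sentence A) = 1 := by simp [sgn]

theorem sgn_cons {A : Type*} (w : List A) (K : Sentence A) :
    sgn (w :: K) = (-1) ^ (w.length + 1) * sgn K := by
  simp only [sgn, List.flatten_cons, List.length_append, List.length_cons]; ring

theorem XS_nil {A : Type*} : XS ([] : List A) = {[]} := by
  ext K
  cases K with
  | nil => simp [XS, isSentence_nil]
  | cons w K => simp [XS, isSentence_cons]; tauto

theorem XS_finite {A : Type*} (u : List A) : (XS u).Finite := by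
  induction u with
  | nil => rw [XS_nil]; exact Set.finite_singleton _
  | cons b bs ih =>
    refine ((ih.image (fun J => [b] :: J)).union (ih.image (glueL [b]))).subset ?_
    rintro K ⟨hK, hf⟩
    cases K with
    | nil => simp at hf
    | cons w K =>
      rw [isSentence_cons] at hK
      cases w with
      | nil => simp at hK
      | cons x w =>
        simp only [List.flatten_cons, List.cons_append, List.cons.injEq] at hf
        obtain ⟨rfl, hf⟩ := hf
        cases w with
        | nil => left; exact ⟨K, ⟨hK.2, by simpa using hf⟩, rfl⟩
        | cons y w => right; exact ⟨(y :: w) :: K, ⟨by simp [isSentence_cons, hK.2], by simpa using hf⟩, by simp [glueL]⟩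

/-- signed sum over coarsenings -/
noncomputable def LS {A : Type*} (u : List A) (h : Sentence A → ℚ) : ℚ :=
  ∑ᶠ K ∈ XS u, sgn K * h K

open Classical in
noncomputable def consInd {A : Type*} (p : List A) (h : Sentence A → ℚ) : Sentence A → ℚ
  | [] => 0
  | w :: K => if w = p then h K else 0

theorem LS_add {A : Type*} (u : List A) (h g : Sentence A → ℚ) :
    LS u (fun K => h K + g K) = LS u h + LS u g := by
  unfold LS
  rw [← finsum_mem_add_distrib (XS_finite u)]
  simp only [mul_add]

theorem LS_congr {A : Type*} (u : List A) {h g : Sentence A → ℚ}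
    (hg : ∀ K, IsSentence K → h K = g K) : LS u h = LS u g := by
  unfold LS
  exact finsum_mem_congr rfl (fun K hK => by rw [hg K hK.1])

theorem LS_consInd {A : Type*} (p r : List A) (hp : p ≠ []) (h : Sentence A → ℚ) :
    LS (p ++ r) (consInd p h) = (-1) ^ (p.length + 1) * LS r h := by
  unfold LS
  rw [mul_finsum_mem]
  have hinj : Set.InjOn (fun K : Sentence A => p :: K) (XS r) := fun a _ b _ h => by simpa using h
  have : ∑ᶠ K ∈ XS r, (-1) ^ (p.length + 1) * (sgn K * h K)
      = ∑ᶠ K ∈ (fun K : Sentence A => p :: K) '' XS r, sgn K * consInd p h K := by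
    rw [finsum_mem_image hinj]
    refine finsum_mem_congr rfl (fun K _ => ?_)
    simp [sgn_cons, consInd, mul_assoc]
  rw [this]
  symm
  apply finsum_mem_inter_support_eq
  ext K
  simp only [Set.mem_inter_iff, Function.mem_support]
  refine and_congr_left (fun hK => ?_)
  cases K with
  | nil => simp [consInd] at hK
  | cons w K =>
    have hw : w = p := by
      by_contra hne
      simp [consInd, hne] at hK
    subst hw
    simp [XS, isSentence_cons, hp]

theorem LS_consInd_zero {A : Type*} (p u : List A) (hp : ¬ p <+: u) (h : Sentence A → ℚ) :
    LS u (consInd p h) = 0 := by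
  unfold LS
  apply finsum_mem_eq_zero_of_forall_eq_zero
  rintro K ⟨hK, rfl⟩
  cases K with
  | nil => simp [consInd]
  | cons w K =>
    have : w ≠ p := by
      rintro rfl
      exact hp (by simp)
    simp [consInd, this]

/-- flattening -/
def flt {A : Type*} (I : Sentence A) : Sentence A := I.filter (fun w => !w.isEmpty)

open Classical in
noncomputable def NN {A : Type*} (I S K : Sentence A) : ℚ :=
  ((splitsOf K).map (fun p => (if flt p.1 = I then (1:ℚ) else 0) * (if flt p.2 = S then 1 else 0))).sum

theorem flt_cons_nil {A : Type*} (K : Sentence A) : flt ([] :: K) = flt K := by simp [flt]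

theorem flt_cons {A : Type*} {w : List A} (hw : w ≠ []) (K : Sentence A) :
    flt (w :: K) = w :: flt K := by simp [flt, hw]

theorem list_sum_range {f : ℕ → ℚ} (n : ℕ) :
    ((List.range n).map f).sum = ∑ t ∈ Finset.range n, f t := by
  simp [Finset.sum, Finset.range, Multiset.range]

open Classical in
/-- contribution of a head word `w`. -/
theorem NN_cons {A : Type*} (I S K : Sentence A) (w : List A) :
    NN I S (w :: K) = ((splitsOf K).map (fun p => ∑ t ∈ Finset.range (w.length + 1),
      (if flt (w.take t :: p.1) = I then (1:ℚ) else 0) *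
        (if flt (w.drop t :: p.2) = S then 1 else 0))).sum := by
  unfold NN
  simp only [splitsOf, List.map_flatten, List.sum_flatten, List.map_map, Function.comp_def]
  simp only [list_sum_range]

open Classical in
theorem NN_cons_ne {A : Type*} (I S K : Sentence A) (w : List A) (hw : w ≠ []) :
    NN I S (w :: K) = ((splitsOf K).map (fun p =>
      (if flt p.1 = I then (1:ℚ) else 0) * (if w :: flt p.2 = S then 1 else 0)
      + (if w :: flt p.1 = I then (1:ℚ) else 0) * (if flt p.2 = S then 1 else 0)
      + ∑ t ∈ Finset.Ioo 0 w.length,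
      (if w.take t :: flt p.1 = I then (1:ℚ) else 0) *
        (if w.drop t :: flt p.2 = S then 1 else 0))).sum := by
  rw [NN_cons]
  congr 1
  apply List.map_congr_left
  intro p _
  have hl : 0 < w.length := List.length_pos_iff.2 hw
  rw [Finset.sum_range_succ, Finset.range_eq_Ico, ← Finset.sum_Ioo_add_eq_sum_Ico hl]
  have h2 : ∀ t ∈ Finset.Ioo 0 w.length,
      (if flt (w.take t :: p.1) = I then (1:ℚ) else 0) *
        (if flt (w.drop t :: p.2) = S then 1 else 0) =
      (if w.take t :: flt p.1 = I then (1:ℚ) else 0) *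
        (if w.drop t :: flt p.2 = S then 1 else 0) := by
    intro t ht
    rw [Finset.mem_Ioo] at ht
    rw [flt_cons, flt_cons]
    · simp; omega
    · simp [hw]; omega
  rw [Finset.sum_congr rfl h2]
  simp only [List.take_zero, List.drop_zero, List.take_length, List.drop_length, flt_cons_nil,
    flt_cons hw]
  ring

theorem NN_nil {A : Type*} : NN ([] : Sentence A) [] [] = 1 := by
  simp [NN, splitsOf, flt]

theorem NN_nil_nil {A : Type*} (K : Sentence A) (w : List A) (hw : w ≠ []) :
    NN ([] : Sentence A) [] (w :: K) = 0 := by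
  rw [NN_cons_ne _ _ _ _ hw]; simp

theorem NN_nil_cons {A : Type*} (s : List A) (S K : Sentence A) (hK : IsSentence K) :
    NN [] (s :: S) K = consInd s (NN [] S) K := by
  classical
  cases K with
  | nil => simp [NN, splitsOf, flt, consInd]
  | cons w K =>
    rw [isSentence_cons] at hK
    rw [NN_cons_ne _ _ _ _ hK.1]
    by_cases h : w = s
    · subst h; simp [consInd, NN]
    · simp [consInd, h]

theorem NN_cons_nil {A : Type*} (s : List A) (S K : Sentence A) (hK : IsSentence K) :
    NN (s :: S) [] K = consInd s (NN S []) K := by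
  classical
  cases K with
  | nil => simp [NN, splitsOf, flt, consInd]
  | cons w K =>
    rw [isSentence_cons] at hK
    rw [NN_cons_ne _ _ _ _ hK.1]
    by_cases h : w = s
    · subst h; simp [consInd, NN]
    · simp [consInd, h]

theorem NN_cons_cons {A : Type*} (p s : List A) (I S K : Sentence A) (hp : p ≠ []) (hs : s ≠ [])
    (hK : IsSentence K) :
    NN (p :: I) (s :: S) K = consInd s (NN (p :: I) S) K + consInd p (NN I (s :: S)) K
      + consInd (p ++ s) (NN I S) K := by
  classical
  cases K with
  | nil => simp [NN, splitsOf, flt, consInd]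
  | cons w K =>
    rw [isSentence_cons] at hK
    rw [NN_cons_ne _ _ _ _ hK.1]
    rw [List.sum_map_add, List.sum_map_add]
    congr 1
    · congr 1
      · by_cases h : w = s
        · subst h; simp [consInd, NN]
        · simp [consInd, h]
      · by_cases h : w = p
        · subst h; simp [consInd, NN]
        · simp [consInd, h]
    · by_cases h : w = p ++ s
      · subst h
        simp only [consInd, if_true, NN]
        congr 1
        apply List.map_congr_left
        intro x _
        rw [Finset.sum_eq_single p.length]
        · simp
        · intro t ht hne
          rw [Finset.mem_Ioo] at ht
          rw [if_neg, zero_mul]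
          intro hh
          simp only [List.cons.injEq] at hh
          have := congrArg List.length hh.1
          rw [List.length_take] at this
          omega
        · intro hh
          exfalso; apply hh
          have := List.length_pos_iff.2 hp
          have := List.length_pos_iff.2 hs
          simp; omega
      · simp only [consInd, if_neg h]
        rw [List.sum_eq_zero]
        intro x hx
        rw [List.mem_map] at hx
        obtain ⟨y, _, rfl⟩ := hx
        apply Finset.sum_eq_zero
        intro t ht
        by_cases h1 : w.take t = p
        · by_cases h2 : w.drop t = s
          · exact absurd (by rw [← h1, ← h2, List.take_append_drop]) h
          · simp [h2]
        · simp [h1]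

open Classical in
theorem LS_NN {A : Type*} (n : ℕ) : ∀ (I S : Sentence A), I.length + S.length ≤ n →
    IsSentence I → IsSentence S → ∀ u,
    LS u (NN I S) = if S.flatten ++ I.flatten = u then sgn S * sgn I else 0 := by
  induction n with
  | zero =>
    intro I S h _ _ u
    have h1 : I = [] := List.length_eq_zero_iff.1 (by omega)
    have h2 : S = [] := List.length_eq_zero_iff.1 (by omega)
    subst h1 h2
    cases u with
    | nil => simp [LS, XS_nil, NN_nil, sgn_nil]
    | cons b bs =>
      simp only [List.flatten_nil, List.append_nil, reduceCtorEq, if_false]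
      apply finsum_mem_eq_zero_of_forall_eq_zero
      rintro K ⟨hK, hf⟩
      cases K with
      | nil => simp at hf
      | cons w K => rw [NN_nil_nil _ _ (isSentence_cons.1 hK).1, mul_zero]
  | succ n ih =>
    intro I S h hI hS u
    have key : ∀ (p : List A) (I S : Sentence A), I.length + S.length ≤ n → p ≠ [] →
        IsSentence I → IsSentence S → LS u (consInd p (NN I S)) =
        if p ++ (S.flatten ++ I.flatten) = u then (-1)^(p.length+1) * (sgn S * sgn I) else 0 := by
      intro p I S hl hp hI hS
      by_cases hpu : p <+: u
      · obtain ⟨r, rfl⟩ := hpu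
        rw [LS_consInd _ _ hp, ih I S hl hI hS]
        simp
      · rw [LS_consInd_zero _ _ hpu, if_neg]
        rintro rfl
        exact hpu (by simp)
    cases I with
    | nil =>
      cases S with
      | nil => exact ih [] [] (by simp) hI hS u
      | cons s S =>
        rw [isSentence_cons] at hS
        rw [LS_congr u (NN_nil_cons s S), key _ _ _ (by simpa using h) hS.1 hI hS.2]
        simp [sgn_cons, sgn_nil]
    | cons p I =>
      rw [isSentence_cons] at hI
      cases S with
      | nil =>
        rw [LS_congr u (NN_cons_nil p I), key _ _ _ (by simpa using h) hI.1 hI.2 hS]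
        simp [sgn_cons, sgn_nil]
      | cons s S =>
        have hS' := hS
        rw [isSentence_cons] at hS
        simp only [List.length_cons] at h
        rw [LS_congr u (fun K hK => NN_cons_cons p s I S K hI.1 hS.1 hK), LS_add, LS_add,
          key _ _ _ (by simp; omega) hS.1 (isSentence_cons.2 hI) hS.2,
          key _ _ _ (by simp; omega) hI.1 hI.2 hS',
          key _ _ _ (by omega) (by simp [hI.1]) hI.2 hS.2]
        simp only [sgn_cons, List.flatten_cons, List.append_assoc, List.length_append]
        by_cases c1 : s ++ (S.flatten ++ (p ++ I.flatten)) = u <;>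
        by_cases c2 : p ++ (s ++ (S.flatten ++ I.flatten)) = u <;>
        simp only [c1, c2, if_true, if_false] <;> ring

end ColoredImm

namespace ColoredImm

theorem refines_mem_XS {A : Type*} {Q S : Sentence A} (hQ : IsSentence Q) (h : Refines Q S) :
    S ∈ XS Q.flatten := by
  obtain ⟨P, hP, rfl, rfl⟩ := h
  refine ⟨?_, by rw [List.flatten_flatten]⟩
  intro w hw
  rw [List.mem_map] at hw
  obtain ⟨p, hp, rfl⟩ := hw
  obtain ⟨x, hx⟩ := List.exists_mem_of_ne_nil _ (hP p hp)
  intro h0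
  rw [List.flatten_eq_nil_iff] at h0
  exact hQ x (List.mem_flatten.2 ⟨p, hp, hx⟩) (h0 x hx)

theorem refines_single_iff {A : Type*} (u : List A) (J : Sentence A) :
    Refines (u.map (fun a => [a])) J ↔ J ∈ XS u := by
  have hfl : ∀ v : List A, (v.map (fun a => [a])).flatten = v := by
    intro v; induction v with
    | nil => rfl
    | cons a v ih => rw [List.map_cons, List.flatten_cons, ih]; rfl
  constructor
  · intro h
    have := refines_mem_XS (by simp [IsSentence]) h
    rwa [hfl] at this
  · rintro ⟨hJ, rfl⟩
    refine ⟨J.map (fun w => w.map (fun a => [a])), ?_, ?_, ?_⟩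
    · intro p hp
      rw [List.mem_map] at hp
      obtain ⟨w, hw, rfl⟩ := hp
      simpa using hJ w hw
    · rw [List.map_flatten]
    · rw [List.map_map]
      conv_rhs => rw [← List.map_id J]
      apply List.map_congr_left
      intro w _
      exact hfl w

theorem refines_nil_iff {A : Type*} (S : Sentence A) : Refines [] S ↔ S = [] := by
  constructor
  · rintro ⟨P, hP, hf, rfl⟩
    cases P with
    | nil => rfl
    | cons p P => simp at hf; exact absurd hf.1 (hP p (by simp))
  · rintro rfl
    exact ⟨[], by simp, rfl, rfl⟩

theorem refines_cons_set {A : Type*} (q : List A) (Q : Sentence A) :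
    {S | Refines (q :: Q) S} =
      (fun S => q :: S) '' {S | Refines Q S} ∪ glueL q '' ({S | Refines Q S} \ {[]}) := by
  ext S
  constructor
  · rintro ⟨P, hP, hf, rfl⟩
    cases P with
    | nil => simp at hf
    | cons p P =>
      have hp := hP p (by simp)
      cases p with
      | nil => simp at hp
      | cons x p =>
        simp only [List.flatten_cons, List.cons_append, List.cons.injEq] at hf
        obtain ⟨rfl, hf⟩ := hf
        cases p with
        | nil =>
          left
          exact ⟨P.map List.flatten, ⟨P, fun p hp => hP p (by simp [hp]), by simpa using hf, rfl⟩,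
            by simp⟩
        | cons y p =>
          right
          refine ⟨((y :: p) :: P).map List.flatten, ⟨⟨(y :: p) :: P, ?_, by simpa using hf, rfl⟩,
            by simp⟩, by simp [glueL]⟩
          intro p' hp'
          rw [List.mem_cons] at hp'
          rcases hp' with rfl | hp'
          · simp
          · exact hP p' (by simp [hp'])
  · rintro (⟨S, ⟨P, hP, rfl, rfl⟩, rfl⟩ | ⟨S, ⟨⟨P, hP, rfl, rfl⟩, h0⟩, rfl⟩)
    · refine ⟨[q] :: P, ?_, by simp, by simp⟩
      intro p hp
      rw [List.mem_cons] at hp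
      rcases hp with rfl | hp
      · simp
      · exact hP p hp
    · cases P with
      | nil => simp at h0
      | cons p P =>
        refine ⟨(q :: p) :: P, ?_, by simp, by simp [glueL]⟩
        intro p' hp
        rw [List.mem_cons] at hp
        rcases hp with rfl | hp
        · simp
        · exact hP p' (by simp [hp])

theorem refines_finite {A : Type*} {Q : Sentence A} (hQ : IsSentence Q) :
    {S | Refines Q S}.Finite :=
  (XS_finite Q.flatten).subset (fun _ h => refines_mem_XS hQ h)

theorem sgn_glueL {A : Type*} (q : List A) (S : Sentence A) (h : S ≠ []) :
    sgn (glueL q S) = - sgn (q :: S) := by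
  cases S with
  | nil => simp at h
  | cons w S =>
    simp only [glueL, sgn_cons, List.length_append]
    ring

theorem sum_sgn_cons_cons {A : Type*} (q q' : List A) (Q : Sentence A)
    (hQ : IsSentence (q' :: Q)) :
    ∑ᶠ S ∈ {S | Refines (q :: q' :: Q) S}, sgn S = 0 := by
  have h0 : ({S | Refines (q' :: Q) S} \ {[]} : Set (Sentence A)) = {S | Refines (q' :: Q) S} := by
    rw [Set.sdiff_singleton_eq_self]
    rintro ⟨P, hP, hf, h⟩
    rw [List.map_eq_nil_iff] at h
    subst h
    simp at hf
  have hfin := refines_finite hQ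
  have hne : ∀ S ∈ {S | Refines (q' :: Q) S}, S ≠ [] := by
    intro S hS
    rw [← h0] at hS
    exact hS.2
  have hdisj : Disjoint ((fun S => q :: S) '' {S | Refines (q' :: Q) S})
      (glueL q '' {S | Refines (q' :: Q) S}) := by
    rw [Set.disjoint_left]
    rintro _ ⟨S, hS, rfl⟩ ⟨S', hS', h⟩
    cases S' with
    | nil => exact hne _ hS' rfl
    | cons w S' =>
      simp [glueL] at h
      exact (isSentence_cons.1 (refines_mem_XS hQ hS').1).1 h.1
  have hinj : Set.InjOn (glueL q) {S | Refines (q' :: Q) S} := by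
    intro S hS S' hS' h
    cases S with
    | nil => exact absurd rfl (hne _ hS)
    | cons w S =>
      cases S' with
      | nil => exact absurd rfl (hne _ hS')
      | cons w' S' => simpa [glueL] using h
  rw [refines_cons_set, h0, finsum_mem_union hdisj (hfin.image _) (hfin.image _),
    finsum_mem_image (fun a _ b _ h => by simpa using h), finsum_mem_image hinj,
    finsum_mem_congr (g := fun S => - sgn (q :: S)) rfl (fun S hS => sgn_glueL q S (hne S hS)),
    finsum_mem_neg_distrib _ hfin, add_neg_cancel]

theorem sum_sgn_one {A : Type*} (q : List A) :
    ∑ᶠ S ∈ {S | Refines [q] S}, sgn S = sgn [q] := by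
  have : {S | Refines [q] S} = {[q]} := by
    rw [refines_cons_set]
    have : {S : Sentence A | Refines [] S} = {[]} := by ext S; simp [refines_nil_iff]
    rw [this]; simp
  rw [this, finsum_mem_singleton]

theorem sum_sgn_nil {A : Type*} :
    ∑ᶠ S ∈ {S : Sentence A | Refines [] S}, sgn S = 1 := by
  have : {S : Sentence A | Refines [] S} = {[]} := by ext S; simp [refines_nil_iff]
  rw [this, finsum_mem_singleton, sgn_nil]

open Classical in
theorem finsum_Hd {A : Type*} (X : Set (Sentence A)) (c : Sentence A → ℚ)
    (h : (X ∩ Function.support c).Finite) :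
    ∑ᶠ J ∈ X, c J • Hd J = fun J => if J ∈ X then c J else 0 := by
  have hs : X ∩ Function.support (fun J => c J • Hd J) ⊆ X ∩ Function.support c := by
    rintro J ⟨h1, h2⟩
    refine ⟨h1, ?_⟩
    intro h3
    apply h2
    simp [h3]
  rw [finsum_mem_eq_sum_of_subset _ (t := h.toFinset) (by simpa using hs) (by simp)]
  ext J
  rw [Finset.sum_apply]
  simp only [Pi.smul_apply, Hd, smul_eq_mul, mul_ite, mul_one, mul_zero]
  rw [Finset.sum_ite_eq]
  simp only [Set.Finite.mem_toFinset, Set.mem_inter_iff, Function.mem_support]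
  by_cases h1 : J ∈ X <;> by_cases h2 : c J = 0 <;> simp [h1, h2]

open Classical in
noncomputable def rib {A : Type*} (u : List A) : NSymA A := fun J => if J ∈ XS u then sgn J else 0

theorem length_le {A : Type*} {J : Sentence A} (h : IsSentence J) :
    J.length ≤ J.flatten.length := by
  induction J with
  | nil => simp
  | cons w J ih =>
    rw [isSentence_cons] at h
    have := ih h.2
    have := List.length_pos_iff.2 h.1
    simp only [List.length_cons, List.flatten_cons, List.length_append]
    omega

theorem rib_eq {A : Type*} (u : List A) :
    ∑ᶠ J ∈ {J : Sentence A | Refines (u.map (fun a => [a])) J},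
        ((-1 : ℚ)) ^ (u.length - J.length) • Hd J = rib u := by
  have : {J : Sentence A | Refines (u.map (fun a => [a])) J} = XS u := by
    ext J; exact refines_single_iff u J
  rw [this, finsum_Hd _ _ ((XS_finite u).inter_of_left _)]
  ext J
  unfold rib
  split_ifs with h
  · have h1 := length_le h.1
    rw [← h.2, sgn]
    have : J.flatten.length + J.length = (J.flatten.length - J.length) + 2 * J.length := by omega
    rw [this, pow_add, pow_mul]; simp
  · rfl

/-! The perp operators -/

theorem restrict_fst {A : Type*} (ws : List (List A)) (js : List ℕ) (h : ws.length = js.length) :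
    (restrictMono ws js).1 = flt ws := by
  unfold restrictMono flt
  induction ws generalizing js with
  | nil => simp
  | cons w ws ih =>
    cases js with
    | nil => simp at h
    | cons j js =>
      have := ih js (by simpa using h)
      cases w <;> simp_all

theorem restrict_valid {A : Type*} (ws : List (List A)) (n : ℕ) (h : ws.length = n) :
    ValidMono (restrictMono ws (List.range' 1 n)) := by
  have hsub : (restrictMono ws (List.range' 1 n)).2.Sublist (List.range' 1 n) := by
    unfold restrictMono
    have h1 := (List.filter_sublist (p := fun p : List A × ℕ => !p.1.isEmpty)
      (l := ws.zip (List.range' 1 n))).map Prod.snd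
    rwa [List.map_snd_zip (by simp [h])] at h1
  refine ⟨by simp [restrictMono], ?_, ?_, ?_⟩
  · apply List.Pairwise.isChain
    exact List.Pairwise.sublist hsub List.pairwise_lt_range'
  · intro j hj
    have := hsub.subset hj
    simp at this
    omega
  · intro w hw
    rw [restrict_fst _ _ (by simp [h])] at hw
    simp [flt] at hw
    exact hw.2

theorem splits_length {A : Type*} (K : Sentence A) : ∀ p ∈ splitsOf K,
    p.1.length = K.length ∧ p.2.length = K.length := by
  induction K with
  | nil => simp [splitsOf]
  | cons w K ih =>
    intro p hp
    simp only [splitsOf, List.mem_flatten, List.mem_map] at hp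
    obtain ⟨l, ⟨p', hp', rfl⟩, hp⟩ := hp
    simp only [List.mem_map] at hp
    obtain ⟨t, _, rfl⟩ := hp
    simp [ih p' hp']

open Classical in
theorem MQ_restrict {A : Type*} (I : Sentence A) (ws : List (List A)) (n : ℕ)
    (h : ws.length = n) :
    MQ I (restrictMono ws (List.range' 1 n)) = if flt ws = I then 1 else 0 := by
  have hv := restrict_valid ws n h
  have hf := restrict_fst ws (List.range' 1 n) (by simp [h])
  unfold MQ
  by_cases hI : flt ws = I
  · rw [if_pos hI, if_pos ⟨hf.trans hI, hv⟩]
  · rw [if_neg hI, if_neg (fun hh => hI (hf.symm.trans hh.1))]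

theorem mulQ_eq {A : Type*} (I S K : Sentence A) :
    mulQ (MQ I) (MQ S) (K, List.range' 1 K.length) = NN I S K := by
  unfold mulQ NN
  congr 1
  apply List.map_congr_left
  intro p hp
  obtain ⟨h1, h2⟩ := splits_length K p hp
  exact congrArg₂ (· * ·) (MQ_restrict I p.1 _ h1) (MQ_restrict S p.2 _ h2)

theorem pair_eq {A : Type*} (u : List A) (I S : Sentence A) :
    pairNQ (rib u) (mulQ (MQ I) (MQ S)) = LS u (NN I S) := by
  unfold pairNQ LS
  simp only [mulQ_eq]
  rw [finsum_mem_congr (s := XS u) (g := fun K => rib u K * NN I S K) rfl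
    (fun K hK => by simp [rib, hK])]
  apply finsum_mem_inter_support_eq
  ext K
  simp only [Set.mem_inter_iff, Function.mem_support]
  refine and_congr_left (fun hK => ?_)
  have : K ∈ XS u := by
    by_contra h
    simp [rib, h] at hK
  exact ⟨fun _ => this, fun h => h.1⟩

open Classical in
theorem rperp_eq {A : Type*} (u : List A) (S : Sentence A) (hS : IsSentence S) :
    rperp (MQ S) (rib u) =
      if S.flatten <+: u then sgn S • rib (u.drop S.flatten.length) else 0 := by
  unfold rperp
  simp only [pair_eq]
  have hval : ∀ I, IsSentence I → LS u (NN I S) = _ := fun I hI => LS_NN _ I S le_rfl hI hS u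
  rw [finsum_Hd]
  · ext I
    by_cases hI : IsSentence I
    · simp only [Set.mem_ofPred_eq, hI, if_true, hval]
      by_cases hp : S.flatten <+: u
      · obtain ⟨r, rfl⟩ := hp
        simp [rib, XS, hI]
      · rw [if_neg, if_neg hp]
        · rfl
        · rintro rfl; exact hp (by simp)
    · simp only [Set.mem_ofPred_eq, hI, if_false]
      split_ifs <;> simp [rib, XS, hI]
  · apply (XS_finite (u.drop S.flatten.length)).subset
    rintro I ⟨hI, h⟩
    rw [Function.mem_support, hval I hI] at h
    refine ⟨hI, ?_⟩
    split_ifs at h with h1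
    · rw [← h1]; simp
    · simp at h

noncomputable def cQ {A : Type*} (Q : Sentence A) : ℚ := ∑ᶠ S ∈ {S | Refines Q S}, sgn S

theorem cQ_nil {A : Type*} : cQ ([] : Sentence A) = 1 := sum_sgn_nil

theorem cQ_one {A : Type*} (q : List A) : cQ [q] = sgn [q] := sum_sgn_one q

open Classical in
theorem sumS_eq {A : Type*} (u : List A) (Q : Sentence A) (hQ : IsSentence Q) :
    ∑ᶠ S ∈ {S : Sentence A | Refines Q S}, rperp (MQ S) (rib u) =
      if Q.flatten <+: u then cQ Q • rib (u.drop Q.flatten.length) else 0 := by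
  rw [finsum_mem_congr (g := fun S => if Q.flatten <+: u then
    sgn S • rib (u.drop Q.flatten.length) else 0) rfl]
  · split_ifs with h
    · unfold cQ
      rw [finsum_mem_eq_finite_toFinset_sum _ (refines_finite hQ),
        finsum_mem_eq_finite_toFinset_sum _ (refines_finite hQ), Finset.sum_smul]
    · simp
  · intro S hS
    have := refines_mem_XS hQ hS
    rw [rperp_eq _ _ this.1, this.2]

theorem mulN_Hd {A : Type*} (w : List A) (f : NSymA A) :
    mulN (Hd [w]) f = fun I => consInd w f I := by
  classical
  ext I
  unfold mulN
  cases I with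
  | nil => simp [Hd, consInd]
  | cons x I =>
    rw [Finset.sum_eq_single 1]
    · simp [Hd, consInd]
    · intro j hj hne
      have : (x :: I).take j ≠ [w] := by
        intro h
        have := congrArg List.length h
        simp at this hj
        omega
      simp [Hd, this]
    · simp

theorem mulN_zero {A : Type*} (f : NSymA A) : mulN f 0 = 0 := by
  ext I; simp [mulN]

def Qs {A : Type*} (u : List A) : ℕ → Sentence A
  | 0 => []
  | j + 1 => [u.take (j + 1)]

theorem Bern_rib {A : Type*} (a : A) (u : List A) :
    Bern [a] (rib u) = ∑ j ∈ Finset.range (u.length + 1),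
      (-1 : ℚ) ^ j • mulN (Hd [a :: u.take j]) (rib (u.drop j)) := by
  classical
  have hQs : ∀ j ∈ Finset.range (u.length + 1), IsSentence (Qs u j) := by
    intro j hj
    cases j with
    | zero => exact isSentence_nil
    | succ j =>
      simp only [Finset.mem_range] at hj
      simp [Qs, IsSentence]
      rintro rfl
      simp at hj
  have hinj : Set.InjOn (Qs u) (Finset.range (u.length + 1) : Set ℕ) := by
    intro i hi j hj h
    simp only [Finset.coe_range, Set.mem_Iio] at hi hj
    cases i <;> cases j <;> simp [Qs] at h ⊢
    omega
  unfold Bern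
  rw [finsum_mem_eq_sum_of_subset _ (t := (Finset.range (u.length + 1)).image (Qs u))]
  · rw [Finset.sum_image hinj]
    apply Finset.sum_congr rfl
    intro j hj
    rw [sumS_eq _ _ (hQs j hj)]
    simp only [Finset.mem_range] at hj
    cases j with
    | zero => simp [Qs, cQ_nil, Hw]
    | succ j =>
      have hl : (u.take (j+1)).length = j + 1 := by simp; omega
      simp only [Qs, cQ_one, Hw, List.flatten_cons, List.flatten_nil, List.append_nil,
        List.take_prefix, if_true, hl, sgn, List.length_singleton, List.reverse_singleton]
      simp only [List.cons_append, List.nil_append, List.isEmpty_cons, mulN_Hd]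
      ext I
      cases I with
      | nil => simp [mulN_Hd, consInd]
      | cons w I => 
        simp [mulN_Hd, consInd]
        split_ifs
        · ring
        · rfl
  · rintro Q ⟨hQ, h⟩
    rw [Function.mem_support] at h
    rw [Set.mem_ofPred_eq] at hQ
    rw [sumS_eq _ _ hQ] at h
    have hp : Q.flatten <+: u := by
      by_contra hp
      simp [hp, mulN_zero] at h
    rw [if_pos hp] at h
    simp only [Finset.coe_image, Set.mem_image, Finset.coe_range, Set.mem_Iio]
    match Q, hQ, h, hp with
    | [], _, _, _ => exact ⟨0, by omega, rfl⟩
    | [q], hQ, _, hp =>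
      simp only [List.flatten_cons, List.flatten_nil, List.append_nil] at hp
      have h0 := List.length_pos_iff.2 (isSentence_cons.1 hQ).1
      refine ⟨q.length, by have := hp.length_le; omega, ?_⟩
      obtain ⟨m, hm⟩ : ∃ m, q.length = m + 1 := ⟨q.length - 1, by omega⟩
      rw [hm, Qs, ← hm, List.prefix_iff_eq_take.1 hp]
      simp
    | q :: q' :: Q, hQ, h, _ =>
      exfalso
      apply h
      rw [cQ, sum_sgn_cons_cons _ _ _ (isSentence_cons.1 hQ).2, zero_smul, mulN_zero, smul_zero]
  · intro Q hQ
    simp only [Finset.coe_image, Set.mem_image, Finset.mem_coe] at hQ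
    obtain ⟨j, hj, rfl⟩ := hQ
    exact hQs j hj

theorem Bern_rib_eq {A : Type*} (a : A) (u : List A) :
    Bern [a] (rib u) = rib (a :: u) := by
  classical
  rw [Bern_rib]
  ext J
  rw [Finset.sum_apply]
  simp only [mulN_Hd, Pi.smul_apply]
  cases J with
  | nil => simp [consInd, rib, XS]
  | cons w J =>
    simp only [consInd]
    by_cases hw : ∃ r, w = a :: r ∧ r <+: u
    · obtain ⟨r, rfl, s, rfl⟩ := hw
      rw [Finset.sum_eq_single r.length]
      · simp [rib, XS, isSentence_cons, sgn_cons]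
        split_ifs
        · ring
        · rfl
      · intro j hj hne
        rw [if_neg, smul_zero]
        intro h
        have := congrArg List.length h
        simp at this hj
        omega
      · intro h
        simp at h
    · rw [Finset.sum_eq_zero]
      · rw [rib, if_neg]
        rintro ⟨h1, h2⟩
        rw [isSentence_cons] at h1
        cases w with
        | nil => simp at h1
        | cons x r =>
          simp at h2
          obtain ⟨rfl, h2⟩ := h2
          exact hw ⟨r, rfl, _, h2⟩
      · intro j _
        rw [if_neg, smul_zero]
        intro h
        exact hw ⟨_, h, List.take_prefix _ _⟩

theorem ImmS_eq {A : Type*} (u : List A) : ImmS (u.map (fun a => [a])) = rib u := by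
  classical
  induction u with
  | nil =>
    ext J
    simp [ImmS, Hd, rib, XS_nil]
    split_ifs with h
    · rw [h, sgn_nil]
    · rfl
  | cons a u ih =>
    rw [← Bern_rib_eq, ← ih]
    rfl

end ColoredImm

namespace ColoredImm

/-- For colors `a_1, …, a_k`, the colored immaculate function indexed by
the sentence of single-letter words satisfies
`𝔖_{(a_1,…,a_k)} = R_{(a_1,…,a_k)} = Σ_{(a_1,…,a_k) ⪯ J} (-1)^{k - ℓ(J)} H_J`. -/
theorem statement16 {A : Type*} (as : List A) :
    (ImmS (as.map (fun a => [a])) = Rib (as.map (fun a => [a]))) ∧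
    (ImmS (as.map (fun a => [a])) =
      ∑ᶠ J ∈ {J : Sentence A | Refines (as.map (fun a => [a])) J},
        ((-1 : ℚ)) ^ (as.length - J.length) • Hd J) := by
  have h := rib_eq as
  refine ⟨?_, by rw [ImmS_eq, h]⟩
  rw [ImmS_eq, Rib, List.length_map, h]

end ColoredImm
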